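/- arXiv:1606.08085 — 2 statements merged into one kernel-verified Lean document; each statement's English description precedes it below -/
import Mathlib

section
/- Let A be the adjacency matrix of an undirected circulant graph on N vertices with generating set S, positive weights (d_s)_{s∈S}, degree d per node and bandwidth B with 2B < N. Let the HGESWT parameters be of the form α_l = 2πl/N with β_l = d̃_{α_l}/d, and suppose there exist two parameter indices i, j among ᾱ (possibly equal) with d̃_{α_i} = −d̃_{α_j} (including the case d̃_{α_i} = 0). Then: (a) for the single-factor filters (k = 1, one parameter), H_{LP,α_i} = (1/2)(β_i I + A/d) equals −H_{HP,α_j} = −(1/2)(β_j I − A/d), so the low-pass branch annihilates and the high-pass branch reproduces the corresponding signals; and (b) for every diagonal downsampling matrix K with diagonal entries in {+1,−1}, the HGESWT filterbank matrix W = (1/2)(I+K)H_LP + (1/2)(I−K)H_HP built from a parameter list containing α_i and α_j is not invertible. -/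
/-- The symmetric circulant adjacency matrix of the circulant graph on `N` vertices
with generating set `S` and weights `w`. -/
noncomputable def circAdj (N : ℕ) (S : Finset ℕ) (w : ℕ → ℝ) :
    Matrix (Fin N) (Fin N) ℝ :=
  fun i j => ∑ s ∈ S,
    if ((i : ℤ) - (j : ℤ)) % (N : ℤ) = (s : ℤ) % (N : ℤ) ∨
       ((i : ℤ) - (j : ℤ)) % (N : ℤ) = (-(s : ℤ)) % (N : ℤ)
    then w s else 0

/-!
When `α_j` is a multiple of `2π / N`, the cosine mode `m ↦ cos (α_j m)` is an eigenvector of the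
normalized adjacency matrix `A / d` with eigenvalue `β_j`. The low-pass filter multiplies it by
`∏ₙ ((β_n + β_j) / 2) ^ k` and the high-pass filter by `∏ₙ ((β_n - β_j) / 2) ^ k`. Since
`β_i = -β_j`, the first product vanishes at `n = i`; the second vanishes at `n = j`. So both
branches lose this mode, whichever output samples the downsampling keeps.
-/

section Filters

open Matrix

variable {n 𝕜 : Type*} [Fintype n] [DecidableEq n] [Field 𝕜] {T : ℕ}

/-- The HGESWT low-pass filter `∏ₙ 2⁻ᵏ (βₙ I + M)ᵏ`, where `M` plays the role of the normalized
adjacency matrix `A / d`. -/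
def hgeswtLowPass (β : Fin T → 𝕜) (M : Matrix n n 𝕜) (k : ℕ) : Matrix n n 𝕜 :=
  ((List.finRange T).map fun t =>
    (1 / 2 ^ k : 𝕜) • (β t • (1 : Matrix n n 𝕜) + M) ^ k).prod

/-- The HGESWT high-pass filter `∏ₙ 2⁻ᵏ (βₙ I - M)ᵏ`, where `M` plays the role of the normalized
adjacency matrix `A / d`. -/
def hgeswtHighPass (β : Fin T → 𝕜) (M : Matrix n n 𝕜) (k : ℕ) : Matrix n n 𝕜 :=
  ((List.finRange T).map fun t =>
    (1 / 2 ^ k : 𝕜) • (β t • (1 : Matrix n n 𝕜) - M) ^ k).prod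

/-- The one-level HGESWT filterbank, in which the downsampling pattern `K` selects between the two
filters; in the paper `K` is diagonal with entries `±1`. -/
def hgeswtFilterbank (β : Fin T → 𝕜) (M : Matrix n n 𝕜) (k : ℕ) (K : Matrix n n 𝕜) :
    Matrix n n 𝕜 :=
  (1 / 2 : 𝕜) • ((1 + K) * hgeswtLowPass β M k) + (1 / 2 : 𝕜) • ((1 - K) * hgeswtHighPass β M k)

theorem list_prod_mulVec_of_mulVec_eq_smul {ι R : Type*} [CommSemiring R] {M : ι → Matrix n n R}
    {v : n → R} {μ : ι → R} (h : ∀ x, M x *ᵥ v = μ x • v) (L : List ι) :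
    (L.map M).prod *ᵥ v = (L.map μ).prod • v := by
  induction L with
  | nil => simp
  | cons x L ih =>
    rw [List.map_cons, List.prod_cons, ← mulVec_mulVec, ih, mulVec_smul, h, smul_smul,
      List.map_cons, List.prod_cons, mul_comm]

theorem pow_mulVec_of_mulVec_eq_smul {R : Type*} [CommSemiring R] {M : Matrix n n R} {v : n → R}
    {μ : R} (h : M *ᵥ v = μ • v) (k : ℕ) : (M ^ k) *ᵥ v = μ ^ k • v := by
  simpa using list_prod_mulVec_of_mulVec_eq_smul (fun _ => h) (List.range k)

theorem hgeswtLowPass_mulVec_of_mulVec_eq_smul {M : Matrix n n 𝕜} {v : n → 𝕜} {μ : 𝕜}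
    (h : M *ᵥ v = μ • v) (β : Fin T → 𝕜) (k : ℕ) :
    hgeswtLowPass β M k *ᵥ v = (∏ t, ((β t + μ) / 2) ^ k) • v := by
  have hshift (t : Fin T) : (β t • (1 : Matrix n n 𝕜) + M) *ᵥ v = (β t + μ) • v := by
    rw [add_mulVec, smul_mulVec, one_mulVec, h, add_smul]
  have hfactor (t : Fin T) : ((1 / 2 ^ k : 𝕜) • (β t • (1 : Matrix n n 𝕜) + M) ^ k) *ᵥ v =
      ((β t + μ) / 2) ^ k • v := by
    rw [smul_mulVec, pow_mulVec_of_mulVec_eq_smul (hshift t), smul_smul,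
      one_div_mul_eq_div, div_pow]
  rw [hgeswtLowPass, list_prod_mulVec_of_mulVec_eq_smul hfactor, Fin.prod_univ_def]

theorem hgeswtHighPass_eq_hgeswtLowPass_neg (β : Fin T → 𝕜) (M : Matrix n n 𝕜) (k : ℕ) :
    hgeswtHighPass β M k = hgeswtLowPass β (-M) k := by
  simp only [hgeswtHighPass, hgeswtLowPass, sub_eq_add_neg]

theorem hgeswtHighPass_mulVec_of_mulVec_eq_smul {M : Matrix n n 𝕜} {v : n → 𝕜} {μ : 𝕜}
    (h : M *ᵥ v = μ • v) (β : Fin T → 𝕜) (k : ℕ) :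
    hgeswtHighPass β M k *ᵥ v = (∏ t, ((β t - μ) / 2) ^ k) • v := by
  have hneg : (-M) *ᵥ v = (-μ) • v := by rw [neg_mulVec, h, neg_smul]
  simpa only [hgeswtHighPass_eq_hgeswtLowPass_neg, sub_eq_add_neg] using
    hgeswtLowPass_mulVec_of_mulVec_eq_smul hneg β k

theorem not_isUnit_hgeswtFilterbank_of_mulVec_eq_smul {M : Matrix n n 𝕜} {v : n → 𝕜} {μ : 𝕜}
    (hv : v ≠ 0) (h : M *ᵥ v = μ • v) {β : Fin T → 𝕜} {i j : Fin T} (hi : β i = -μ)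
    (hj : β j = μ) {k : ℕ} (hk : k ≠ 0) (K : Matrix n n 𝕜) :
    ¬ IsUnit (hgeswtFilterbank β M k K) := by
  have hLP : hgeswtLowPass β M k *ᵥ v = 0 := by
    rw [hgeswtLowPass_mulVec_of_mulVec_eq_smul h,
      Finset.prod_eq_zero (Finset.mem_univ i) (by simp [hi, hk]), zero_smul]
  have hHP : hgeswtHighPass β M k *ᵥ v = 0 := by
    rw [hgeswtHighPass_mulVec_of_mulVec_eq_smul h,
      Finset.prod_eq_zero (Finset.mem_univ j) (by simp [hj, hk]), zero_smul]
  have hW : hgeswtFilterbank β M k K *ᵥ v = 0 := by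
    simp only [hgeswtFilterbank, add_mulVec, smul_mulVec, ← mulVec_mulVec, hLP, hHP, mulVec_zero,
      smul_zero, add_zero]
  exact fun hunit => hv (mulVec_injective_of_isUnit hunit (hW.trans (mulVec_zero _).symm))

end Filters

section Circulant

open Matrix

variable {N : ℕ} {S : Finset ℕ} {w : ℕ → ℝ}

/-- The degree `d = ∑ 2 w_s` of every vertex of the circulant graph with generating set `S` and
weights `w`. -/
def circDegree (S : Finset ℕ) (w : ℕ → ℝ) : ℝ :=
  ∑ s ∈ S, 2 * w s

/-- The exponential degree `d̃_α = ∑ 2 w_s cos (α s)` of the circulant graph with generating set `S`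
and weights `w`. -/
noncomputable def expDegree (S : Finset ℕ) (w : ℕ → ℝ) (α : ℝ) : ℝ :=
  ∑ s ∈ S, 2 * w s * Real.cos (α * s)

theorem circDegree_pos (hS : S.Nonempty) (hw : ∀ s ∈ S, 0 < w s) : 0 < circDegree S w :=
  Finset.sum_pos (fun s hs => mul_pos two_pos (hw s hs)) hS

theorem sum_fin_ite_modEq_of_periodic {R : Type*} [AddCommMonoid R] [NeZero N] {f : ℤ → R}
    (hf : Function.Periodic f N) (x : ℤ) :
    (∑ m : Fin N, if (m : ℤ) ≡ x [ZMOD N] then f m else 0) = f x := by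
  have hN : (N : ℤ) ≠ 0 := NeZero.ne _
  obtain ⟨r, hr⟩ : ∃ r : Fin N, (r : ℤ) = x % N :=
    have := Int.emod_nonneg x hN
    have := Int.emod_lt_of_pos x (by omega : (0 : ℤ) < N)
    ⟨⟨(x % N).toNat, by omega⟩, by simp [*]⟩
  have hmod (m : Fin N) : (m : ℤ) ≡ x [ZMOD N] ↔ m = r := by
    rw [Int.ModEq, Int.emod_eq_of_lt (by omega) (by omega), ← hr, Nat.cast_inj, Fin.val_inj]
  have hfr : f r = f x := by
    rw [hr, Int.emod_def, mul_comm]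
    exact hf.sub_int_mul_eq _
  simp only [hmod, Finset.sum_ite_eq', Finset.mem_univ, if_true, hfr]

/-- The disjunction in `circAdj` splits into a sum because `¬ N ∣ 2 * s` makes the shifts by `s` and
`-s` distinct modulo `N`. -/
theorem circAdj_apply_eq_sum_add (hS : ∀ s ∈ S, ¬ N ∣ 2 * s) (a m : Fin N) :
    circAdj N S w a m = ∑ s ∈ S, ((if (m : ℤ) ≡ a - s [ZMOD N] then w s else 0) +
      if (m : ℤ) ≡ a + s [ZMOD N] then w s else 0) := by
  refine Finset.sum_congr rfl fun s hs => ?_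
  have hshift (t : ℤ) : ((a : ℤ) - m) % N = t % N ↔ (m : ℤ) ≡ a - t [ZMOD N] := by
    change (a : ℤ) - m ≡ t [ZMOD N] ↔ _
    rw [Int.modEq_comm, Int.modEq_iff_dvd, Int.modEq_iff_dvd, sub_right_comm]
  have hdisjoint : ¬ ((m : ℤ) ≡ a - s [ZMOD N] ∧ (m : ℤ) ≡ a + s [ZMOD N]) := by
    rintro ⟨hsub, hadd⟩
    have hdvd := (hsub.symm.trans hadd).dvd
    rw [add_sub_sub_cancel, ← two_mul] at hdvd
    exact hS s hs (by exact_mod_cast hdvd)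
  simp only [hshift, sub_neg_eq_add]
  split_ifs <;> simp_all

theorem circAdj_mulVec_apply_of_periodic [NeZero N] (hS : ∀ s ∈ S, ¬ N ∣ 2 * s) {f : ℤ → ℝ}
    (hf : Function.Periodic f N) (a : Fin N) :
    (circAdj N S w *ᵥ fun m => f m) a = ∑ s ∈ S, w s * (f (a - s) + f (a + s)) := by
  have hpick (s : ℕ) (x : ℤ) :
      ∑ m : Fin N, (if (m : ℤ) ≡ x [ZMOD N] then w s else 0) * f m = w s * f x := by
    rw [← sum_fin_ite_modEq_of_periodic hf x, Finset.mul_sum]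
    simp only [ite_mul, mul_ite, zero_mul, mul_zero]
  simp only [mulVec, dotProduct, circAdj_apply_eq_sum_add hS, Finset.sum_mul]
  rw [Finset.sum_comm]
  simp only [add_mul, Finset.sum_add_distrib, hpick, mul_add]

theorem periodic_cos_two_pi_mul_div [NeZero N] (l : ℤ) :
    Function.Periodic (fun m : ℤ => Real.cos (2 * Real.pi * l / N * m)) N := by
  intro m
  have hN : (N : ℝ) ≠ 0 := NeZero.ne _
  have hangle : 2 * Real.pi * l / N * ((m + N : ℤ) : ℝ) =
      2 * Real.pi * l / N * m + l * (2 * Real.pi) := by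
    push_cast
    field_simp
  simp only [hangle, Real.cos_add_int_mul_two_pi]

theorem circAdj_mulVec_cos [NeZero N] (hS : ∀ s ∈ S, ¬ N ∣ 2 * s) {θ : ℝ} {l : ℤ}
    (hθ : θ = 2 * Real.pi * l / N) :
    circAdj N S w *ᵥ (fun m => Real.cos (θ * (m : ℤ))) =
      expDegree S w θ • fun m : Fin N => Real.cos (θ * (m : ℤ)) := by
  ext a
  have hper := periodic_cos_two_pi_mul_div (N := N) l
  rw [← hθ] at hper
  rw [circAdj_mulVec_apply_of_periodic hS hper, Pi.smul_apply, expDegree, smul_eq_mul,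
    Finset.sum_mul]
  refine Finset.sum_congr rfl fun s _ => ?_
  push_cast
  rw [mul_sub θ, mul_add θ, Real.cos_sub, Real.cos_add]
  ring

end Circulant

theorem hgeswt_opposing_parameters_not_invertible_general {N : ℕ} [NeZero N] {S : Finset ℕ}
    {w : ℕ → ℝ} (hS : ∀ s ∈ S, ¬ N ∣ 2 * s) (hd : circDegree S w ≠ 0) {T : ℕ}
    {α β : Fin T → ℝ} (hβ : ∀ t, circDegree S w * β t = expDegree S w (α t)) {i j : Fin T} {l : ℤ}
    (hαj : α j = 2 * Real.pi * l / N) (hij : expDegree S w (α i) = -expDegree S w (α j))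
    {k : ℕ} (hk : k ≠ 0) :
    (1 / 2 : ℝ) • (β i • (1 : Matrix (Fin N) (Fin N) ℝ) + (circDegree S w)⁻¹ • circAdj N S w) =
      -((1 / 2 : ℝ) • (β j • (1 : Matrix (Fin N) (Fin N) ℝ)
        - (circDegree S w)⁻¹ • circAdj N S w)) ∧
    ∀ K, ¬ IsUnit (hgeswtFilterbank β ((circDegree S w)⁻¹ • circAdj N S w) k K) := by
  have hβij : β i = -β j := mul_left_cancel₀ hd (by rw [hβ, hij, ← hβ, mul_neg])
  refine ⟨by rw [hβij]; module, fun K => ?_⟩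
  have hmode : (fun m : Fin N => Real.cos (α j * (m : ℤ))) ≠ 0 := fun h => by
    simpa using congrFun h 0
  refine not_isUnit_hgeswtFilterbank_of_mulVec_eq_smul hmode ?_ hβij rfl hk K
  rw [Matrix.smul_mulVec, circAdj_mulVec_cos hS hαj, ← hβ, smul_smul, inv_mul_cancel_left₀ hd]

/-- if two HGESWT parameters (of the form `α_l = 2πl/N`) satisfy
`d̃_{α_i} = −d̃_{α_j}`, then (a) for single factors `H_{LP,α_i} = −H_{HP,α_j}` (low-pass
annihilates, high-pass reproduces), and (b) the HGESWT filterbank built from a parameter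
list containing `α_i` and `α_j` is not invertible for any downsampling pattern. -/
theorem hgeswt_opposing_parameters_not_invertible
    (N : ℕ) (hN : 1 ≤ N) (S : Finset ℕ) (w : ℕ → ℝ)
    (hS : ∀ s ∈ S, 1 ≤ s ∧ 2 * s ≤ N - 1)
    (hw : ∀ s ∈ S, 0 < w s) (hSne : S.Nonempty)
    (B : ℕ) (hBS : B ∈ S) (hBmax : ∀ s ∈ S, s ≤ B) (hB : 2 * B < N)
    (A : Matrix (Fin N) (Fin N) ℝ) (hA : A = circAdj N S w)
    (T : ℕ) (α : Fin T → ℝ)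
    (hform : ∀ n : Fin T, ∃ l : ℕ, α n = 2 * Real.pi * l / N)
    (β : Fin T → ℝ)
    (hβ : ∀ n : Fin T, β n =
      (∑ s ∈ S, 2 * w s * Real.cos (α n * s)) / (∑ s ∈ S, 2 * w s))
    (i j : Fin T)
    (hij : (∑ s ∈ S, 2 * w s * Real.cos (α i * s)) =
      -(∑ s ∈ S, 2 * w s * Real.cos (α j * s)))
    (k : ℕ) (hk : 1 ≤ k)
    (HLP HHP : Matrix (Fin N) (Fin N) ℝ)
    (hHLP : HLP = ((List.finRange T).map (fun n =>
      (1 / 2 ^ k : ℝ) • (β n • (1 : Matrix (Fin N) (Fin N) ℝ)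
        + (∑ s ∈ S, 2 * w s)⁻¹ • A) ^ k)).prod)
    (hHHP : HHP = ((List.finRange T).map (fun n =>
      (1 / 2 ^ k : ℝ) • (β n • (1 : Matrix (Fin N) (Fin N) ℝ)
        - (∑ s ∈ S, 2 * w s)⁻¹ • A) ^ k)).prod) :
    ((1 / 2 : ℝ) • (β i • (1 : Matrix (Fin N) (Fin N) ℝ) + (∑ s ∈ S, 2 * w s)⁻¹ • A) =
      -((1 / 2 : ℝ) • (β j • (1 : Matrix (Fin N) (Fin N) ℝ) - (∑ s ∈ S, 2 * w s)⁻¹ • A)))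
    ∧ ∀ K : Matrix (Fin N) (Fin N) ℝ,
        (∀ a b : Fin N, a ≠ b → K a b = 0) →
        (∀ a : Fin N, K a a = 1 ∨ K a a = -1) →
        ∀ W : Matrix (Fin N) (Fin N) ℝ,
          W = (1 / 2 : ℝ) • ((1 + K) * HLP) + (1 / 2 : ℝ) • ((1 - K) * HHP) →
          ¬ IsUnit W := by
  have : NeZero N := ⟨by omega⟩
  have hd : circDegree S w ≠ 0 := (circDegree_pos hSne hw).ne'
  have hS' : ∀ s ∈ S, ¬ N ∣ 2 * s := fun s hs =>
    have hs := hS s hs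
    Nat.not_dvd_of_pos_of_lt (by omega) (by omega)
  have hβ' (t : Fin T) : circDegree S w * β t = expDegree S w (α t) :=
    hβ t ▸ mul_div_cancel₀ _ hd
  obtain ⟨l, hl⟩ := hform j
  subst hA hHLP hHHP
  exact (hgeswt_opposing_parameters_not_invertible_general hS' hd hβ' (l := l) (mod_cast hl) hij
    (Nat.one_le_iff_ne_zero.mp hk)).imp_right fun hbank K _ _ W hW => hW ▸ hbank K
end

section
/- Let A be the adjacency matrix of an undirected circulant graph on N vertices (N even) with degree d per node, and let γ_l = d̃_{2πl/N}/d (l = 0,…,N−1) denote the DFT-ordered eigenvalues of A/d. Let W = (1/2)(I+K)H_LP + (1/2)(I−K)H_HP be the HGESWT filterbank matrix with parameters β_1,…,β_T, order k, and the alternating downsampling pattern K (K_{ii} = +1 for even i, K_{ii} = −1 for odd i). Suppose there exist parameter indices i, j ∈ {1,…,T} and frequency indices p, q ∈ {0,…,N−1} with q ≡ p + N/2 (mod N) such that β_i = γ_p and β_j = γ_q. Then W is not invertible. -/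
/-!
Any polynomial in `A` acts on an eigenvector of `A` by a scalar, and `K` exchanges the cosine of
frequency `p` with the cosine of frequency `q = p + N / 2` (spectral folding). Since `β_i = γ_p` and
`β_j = γ_q`, the high-pass filter annihilates both cosines. So only the low-pass branch
`(1 / 2) (I + K) H_LP` remains on the plane they span, and it maps the whole plane into the line
spanned by their sum. The phase of the cosines is chosen so that they are linearly independent,
which lets the argument run over `ℝ`.
-/

open Matrix Polynomial

section LinearAlgebra

variable {n R F : Type*} [Fintype n] [DecidableEq n] [CommRing R] [Field F]

theorem aeval_mulVec_of_mulVec_eq_smul {A : Matrix n n R} {v : n → R} {μ : R}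
    (h : A *ᵥ v = μ • v) (f : R[X]) : aeval A f *ᵥ v = f.eval μ • v := by
  have hA : toLinAlgEquiv' A v = μ • v := h
  rw [← Module.End.aeval_apply_of_mem_apply_eq_smul hA, aeval_algHom_apply]
  rfl

theorem not_isUnit_of_mulVec_eq_smul_of_mulVec_eq_smul [Nontrivial R] {W : Matrix n n R}
    {v u z : n → R} {x y : R} (hvu : LinearIndependent R ![v, u]) (hv : W *ᵥ v = x • z)
    (hu : W *ᵥ u = y • z) : ¬ IsUnit W := by
  intro hW
  have eq_zero_of_mulVec (t : n → R) (ht : W *ᵥ t = 0) : t = 0 :=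
    mulVec_injective_of_isUnit hW (ht.trans (mulVec_zero W).symm)
  have hyx : y • v + -x • u = 0 := eq_zero_of_mulVec _ <| by
    rw [mulVec_add, mulVec_smul, mulVec_smul, hv, hu, smul_smul, smul_smul, ← add_smul,
      mul_comm y, neg_mul, add_neg_cancel, zero_smul]
  have hx : x = 0 := neg_eq_zero.1 (hvu.eq_zero_of_pair hyx).2
  exact hvu.ne_zero 0 (eq_zero_of_mulVec v (by rw [hv, hx, zero_smul]))

theorem linearIndependent_pair_diagonal_mulVec [NoZeroDivisors R] {d v : n → R} {i j : n}
    (hd : d i ≠ d j) (hi : v i ≠ 0) (hj : v j ≠ 0) :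
    LinearIndependent R ![v, diagonal d *ᵥ v] := by
  refine LinearIndependent.pair_iff.2 fun s t hst => ?_
  have coeff_eq_zero (a : n) (ha : v a ≠ 0) : s + t * d a = 0 := by
    have h := congrFun hst a
    simp only [Pi.add_apply, Pi.smul_apply, mulVec_diagonal, smul_eq_mul, Pi.zero_apply] at h
    exact (mul_eq_zero.1 (by linear_combination h)).resolve_right ha
  have ht : t = 0 := (mul_eq_zero.1 (show t * (d i - d j) = 0 by
    linear_combination coeff_eq_zero i hi - coeff_eq_zero j hj)).resolve_right (sub_ne_zero.2 hd)
  exact ⟨by simpa [ht] using coeff_eq_zero i hi, ht⟩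

/-- The two-channel filterbank with low-pass filter `H` and high-pass filter `G`. The sampling
matrix `K` is intended to be a diagonal sign matrix: `+1` keeps the low-pass output at a vertex and
`-1` the high-pass output. -/
def filterbank (K H G : Matrix n n F) : Matrix n n F :=
  (1 / 2 : F) • ((1 + K) * H) + (1 / 2 : F) • ((1 - K) * G)

theorem filterbank_mulVec {K H G : Matrix n n F} {v u : n → F} {x : F} (hK : K *ᵥ v = u)
    (hH : H *ᵥ v = x • v) (hG : G *ᵥ v = 0) :
    filterbank K H G *ᵥ v = (1 / 2 * x) • (v + u) := by
  rw [filterbank, add_mulVec, smul_mulVec, smul_mulVec, ← mulVec_mulVec, ← mulVec_mulVec, hH, hG,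
    mulVec_zero, smul_zero, add_zero, mulVec_smul, add_mulVec, one_mulVec, hK, smul_smul]

theorem not_isUnit_filterbank {K H G : Matrix n n F} {v u : n → F} {x y : F}
    (hvu : LinearIndependent F ![v, u]) (hKv : K *ᵥ v = u) (hKu : K *ᵥ u = v)
    (hHv : H *ᵥ v = x • v) (hHu : H *ᵥ u = y • u) (hGv : G *ᵥ v = 0) (hGu : G *ᵥ u = 0) :
    ¬ IsUnit (filterbank K H G) :=
  not_isUnit_of_mulVec_eq_smul_of_mulVec_eq_smul hvu (filterbank_mulVec hKv hHv hGv)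
    (add_comm v u ▸ filterbank_mulVec hKu hHu hGu)

end LinearAlgebra

theorem sum_ite_modEq_of_periodic {M : Type*} [AddCommMonoid M] {N : ℕ} [NeZero N] {f : ℤ → M}
    (hf : Function.Periodic f N) (m : ℤ) :
    ∑ b : Fin N, (if (b : ℤ) ≡ m [ZMOD N] then f b else 0) = f m := by
  have hN : (0 : ℤ) < N := mod_cast NeZero.pos N
  obtain ⟨r, hr⟩ : ∃ r : Fin N, (r : ℤ) = m % N :=
    ⟨⟨(m % N).toNat, by have := Int.emod_lt_of_pos m hN; omega⟩,
      Int.toNat_of_nonneg (Int.emod_nonneg m hN.ne')⟩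
  have modEq_iff (b : Fin N) : (b : ℤ) ≡ m [ZMOD N] ↔ b = r := by
    rw [Int.ModEq, Int.emod_eq_of_lt (by omega) (by omega), ← hr, Nat.cast_inj, Fin.val_inj]
  simp only [modEq_iff, Finset.sum_ite_eq', Finset.mem_univ, if_true]
  rw [hr, Int.emod_def, mul_comm]
  exact hf.sub_int_mul_eq _

theorem circAdj_mulVec {N : ℕ} {S : Finset ℕ} (w : ℕ → ℝ) (hS : ∀ s ∈ S, ¬ N ∣ 2 * s)
    {f : ℤ → ℝ} (hf : Function.Periodic f N) (a : Fin N) :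
    (circAdj N S w *ᵥ fun b => f b) a = ∑ s ∈ S, w s * (f (a - s) + f (a + s)) := by
  have : NeZero N := .of_pos a.pos
  have sub_emod_iff (b : Fin N) (t : ℤ) :
      ((a : ℤ) - b) % N = t % N ↔ (b : ℤ) ≡ a - t [ZMOD N] := by
    rw [← Int.ModEq, Int.modEq_iff_dvd, Int.modEq_iff_dvd, ← dvd_neg]
    ring_nf
  simp only [mulVec, dotProduct, circAdj, Finset.sum_mul]
  rw [Finset.sum_comm]
  refine Finset.sum_congr rfl fun s hs => ?_
  have hs_neg : ¬ ((s : ℤ) % N = -(s : ℤ) % N) := fun h => hS s hs <| by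
    have := Int.ModEq.dvd (Eq.symm h)
    rw [sub_neg_eq_add, ← two_mul] at this
    exact_mod_cast this
  rw [← sub_neg_eq_add (a : ℤ), ← sum_ite_modEq_of_periodic hf (a - s),
    ← sum_ite_modEq_of_periodic hf (a - -s), ← Finset.sum_add_distrib, Finset.mul_sum]
  refine Finset.sum_congr rfl fun b _ => ?_
  simp only [← sub_emod_iff]
  by_cases hb : ((a : ℤ) - b) % N = s % N
  · simp [hb, hs_neg]
  · simp [hb]

/-- The exponential degree at `2πl/N`, which is the `l`-th eigenvalue, in DFT order, of
`circAdj N S w` when no `s ∈ S` is congruent to `-s` modulo `N`. Unlike `γ_l`, it is not divided by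
the vertex degree. -/
noncomputable def circEigenvalue (N : ℕ) (S : Finset ℕ) (w : ℕ → ℝ) (l : ℕ) : ℝ :=
  ∑ s ∈ S, 2 * w s * Real.cos (2 * Real.pi * l * s / N)

/-- The sampled cosine of frequency `2πl/N` and phase `φ`: the real part of a unimodular multiple
of the DFT vector `v_l`. -/
noncomputable def dftCosine (N l : ℕ) (φ : ℝ) (b : Fin N) : ℝ :=
  Real.cos (2 * Real.pi * l * b / N + φ)

theorem circAdj_mulVec_dftCosine {N : ℕ} {S : Finset ℕ} (w : ℕ → ℝ)
    (hS : ∀ s ∈ S, ¬ N ∣ 2 * s) (l : ℕ) (φ : ℝ) :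
    circAdj N S w *ᵥ dftCosine N l φ = circEigenvalue N S w l • dftCosine N l φ := by
  ext a
  have hN : (N : ℝ) ≠ 0 := mod_cast a.pos.ne'
  have hf : Function.Periodic (fun x : ℤ => Real.cos (2 * Real.pi * l * x / N + φ)) N := by
    intro x
    have : 2 * Real.pi * l * ((x + N : ℤ) : ℝ) / N + φ
        = 2 * Real.pi * l * x / N + φ + l * (2 * Real.pi) := by
      push_cast
      field_simp
      ring
    simp only [this, Real.cos_add_nat_mul_two_pi]
  calc (circAdj N S w *ᵥ dftCosine N l φ) a
      = ∑ s ∈ S, w s * (Real.cos (2 * Real.pi * l * ((a - s : ℤ) : ℝ) / N + φ)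
          + Real.cos (2 * Real.pi * l * ((a + s : ℤ) : ℝ) / N + φ)) := by
        exact circAdj_mulVec w hS hf a
    _ = ∑ s ∈ S, 2 * w s * Real.cos (2 * Real.pi * l * s / N) * dftCosine N l φ a := by
        refine Finset.sum_congr rfl fun s _ => ?_
        have hsub : 2 * Real.pi * l * ((a - s : ℤ) : ℝ) / N + φ
            = (2 * Real.pi * l * a / N + φ) - 2 * Real.pi * l * s / N := by
          push_cast
          ring
        have hadd : 2 * Real.pi * l * ((a + s : ℤ) : ℝ) / N + φ
            = (2 * Real.pi * l * a / N + φ) + 2 * Real.pi * l * s / N := by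
          push_cast
          ring
        rw [hsub, hadd, ← Real.two_mul_cos_mul_cos, dftCosine]
        ring
    _ = (circEigenvalue N S w l • dftCosine N l φ) a := by
        rw [Pi.smul_apply, smul_eq_mul, circEigenvalue, Finset.sum_mul]

/-- The alternating downsampling pattern: the low-pass output is kept at the even vertices and the
high-pass output at the odd ones. -/
def alternatingPattern (N : ℕ) : Matrix (Fin N) (Fin N) ℝ :=
  diagonal fun a => if Even (a : ℕ) then 1 else -1

theorem alternatingPattern_mulVec_dftCosine {N p q : ℕ} (hN : Even N)
    (hpq : q ≡ p + N / 2 [MOD N]) (φ : ℝ) :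
    alternatingPattern N *ᵥ dftCosine N p φ = dftCosine N q φ := by
  ext b
  have hN0 : (N : ℝ) ≠ 0 := mod_cast b.pos.ne'
  obtain ⟨t, ht_int⟩ := Nat.modEq_iff_dvd.1 hpq
  have ht : (p : ℝ) + (N / 2 : ℕ) - q = N * t := mod_cast ht_int
  have hhalf : ((N / 2 : ℕ) : ℝ) * 2 = N := mod_cast Nat.div_mul_cancel hN.two_dvd
  have hangle : 2 * Real.pi * q * b / N + φ
      = 2 * Real.pi * p * b / N + φ + (b : ℕ) * Real.pi - (t * b : ℤ) * (2 * Real.pi) := by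
    push_cast
    field_simp
    linear_combination Real.pi * b * hhalf - 2 * Real.pi * b * ht
  rw [alternatingPattern, mulVec_diagonal, ← neg_one_pow_eq_ite, dftCosine, dftCosine, hangle,
    Real.cos_sub_int_mul_two_pi, Real.cos_add_nat_mul_pi]

theorem exists_cos_ne_zero_and_cos_add_ne_zero (θ : ℝ) :
    ∃ φ : ℝ, Real.cos φ ≠ 0 ∧ Real.cos (θ + φ) ≠ 0 := by
  by_cases hθ : Real.cos θ = 0
  · have hhalf : Real.cos (θ / 2) ≠ 0 := fun h => by
      have := Real.cos_sq (θ / 2)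
      rw [h, mul_div_cancel₀ θ two_ne_zero, hθ] at this
      norm_num at this
    refine ⟨-(θ / 2), by rwa [Real.cos_neg], ?_⟩
    rwa [← sub_eq_add_neg, sub_half]
  · exact ⟨0, by simp, by simpa using hθ⟩

theorem exists_linearIndependent_dftCosine {N p q : ℕ} [NeZero N] (hN : Even N)
    (hpq : q ≡ p + N / 2 [MOD N]) :
    ∃ φ : ℝ, LinearIndependent ℝ ![dftCosine N p φ, dftCosine N q φ] := by
  have hN2 : 1 < N := by
    have := NeZero.pos N
    grind
  obtain ⟨φ, hφ₀, hφ₁⟩ := exists_cos_ne_zero_and_cos_add_ne_zero (2 * Real.pi * p / N)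
  refine ⟨φ, ?_⟩
  rw [← alternatingPattern_mulVec_dftCosine hN hpq]
  refine linearIndependent_pair_diagonal_mulVec (i := ⟨0, NeZero.pos N⟩) (j := ⟨1, hN2⟩) ?_ ?_ ?_
  · norm_num
  · simpa [dftCosine] using hφ₀
  · simpa [dftCosine] using hφ₁

theorem hgeswt_spectral_folding_not_invertible_general {N : ℕ} [NeZero N] (hN : Even N)
    {S : Finset ℕ} (w : ℕ → ℝ) (hS : ∀ s ∈ S, ¬ N ∣ 2 * s) {p q : ℕ}
    (hpq : q ≡ p + N / 2 [MOD N]) (h g : ℝ[X])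
    (hp : g.IsRoot (circEigenvalue N S w p)) (hq : g.IsRoot (circEigenvalue N S w q)) :
    ¬ IsUnit (filterbank (alternatingPattern N) (aeval (circAdj N S w) h)
      (aeval (circAdj N S w) g)) := by
  obtain ⟨φ, hφ⟩ := exists_linearIndependent_dftCosine hN hpq
  have hqp : p ≡ q + N / 2 [MOD N] := by
    have := hpq.symm.add_right (N / 2)
    rw [add_assoc, ← two_mul, Nat.two_mul_div_two_of_even hN] at this
    simpa using this
  have aeval_mulVec (f : ℝ[X]) (l : ℕ) : aeval (circAdj N S w) f *ᵥ dftCosine N l φ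
      = f.eval (circEigenvalue N S w l) • dftCosine N l φ :=
    aeval_mulVec_of_mulVec_eq_smul (circAdj_mulVec_dftCosine w hS l φ) f
  exact not_isUnit_filterbank hφ (alternatingPattern_mulVec_dftCosine hN hpq φ)
    (alternatingPattern_mulVec_dftCosine hN hqp φ) (aeval_mulVec h p) (aeval_mulVec h q)
    (by rw [aeval_mulVec, hp.eq_zero, zero_smul]) (by rw [aeval_mulVec, hq.eq_zero, zero_smul])

section HgeswtPolynomial

variable {F : Type*} [Field F] {T : ℕ}

/-- The polynomial whose value at `A` is the HGESWT filter of order `k` with parameters `β`: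
`c = 1 / d` gives the low-pass filter and `c = -1 / d` the high-pass filter. -/
noncomputable def hgeswtPolynomial (k : ℕ) (β : Fin T → F) (c : F) : F[X] :=
  ((List.finRange T).map fun n => C (1 / 2 ^ k) * (C (β n) + C c * X) ^ k).prod

theorem aeval_hgeswtPolynomial {m : Type*} [Fintype m] [DecidableEq m] (k : ℕ) (β : Fin T → F)
    (c : F) (A : Matrix m m F) :
    aeval A (hgeswtPolynomial k β c)
      = ((List.finRange T).map fun n =>
          (1 / 2 ^ k : F) • (β n • (1 : Matrix m m F) + c • A) ^ k).prod := by
  simp only [hgeswtPolynomial, map_list_prod, List.map_map, Function.comp_def, map_mul, map_pow,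
    map_add, aeval_C, aeval_X, Algebra.algebraMap_eq_smul_one, smul_one_mul]

theorem isRoot_hgeswtPolynomial {k : ℕ} (hk : k ≠ 0) {β : Fin T → F} {c x : F} {i : Fin T}
    (hi : β i + c * x = 0) : (hgeswtPolynomial k β c).IsRoot x := by
  rw [hgeswtPolynomial, IsRoot, eval_list_prod, List.map_map]
  refine List.prod_eq_zero (List.mem_map.2 ⟨i, List.mem_finRange i, ?_⟩)
  simp [hi, hk]

end HgeswtPolynomial

/-- if two HGESWT parameters coincide with DFT-ordered eigenvalues of `A/d`
at frequency positions `p` and `q ≡ p + N/2 (mod N)`, then the filterbank with the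
alternating downsampling pattern is not invertible. -/
theorem hgeswt_spectral_folding_not_invertible
    (N : ℕ) (hNe : Even N) (hN : 1 ≤ N) (S : Finset ℕ) (w : ℕ → ℝ)
    (hS : ∀ s ∈ S, 1 ≤ s ∧ 2 * s ≤ N - 1)
    (hw : ∀ s ∈ S, 0 < w s) (hSne : S.Nonempty)
    (A : Matrix (Fin N) (Fin N) ℝ) (hA : A = circAdj N S w)
    (γ : ℕ → ℝ)
    (hγ : ∀ l : ℕ, γ l =
      (∑ s ∈ S, 2 * w s * Real.cos (2 * Real.pi * l * s / N)) / (∑ s ∈ S, 2 * w s))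
    (T : ℕ) (α : Fin T → ℝ)
    (β : Fin T → ℝ)
    (hβ : ∀ n : Fin T, β n =
      (∑ s ∈ S, 2 * w s * Real.cos (α n * s)) / (∑ s ∈ S, 2 * w s))
    (i j : Fin T) (p q : ℕ) (hp : p < N) (hq : q < N)
    (hpq : q ≡ p + N / 2 [MOD N])
    (hbi : β i = γ p) (hbj : β j = γ q)
    (k : ℕ) (hk : 1 ≤ k)
    (HLP HHP : Matrix (Fin N) (Fin N) ℝ)
    (hHLP : HLP = ((List.finRange T).map (fun n =>
      (1 / 2 ^ k : ℝ) • (β n • (1 : Matrix (Fin N) (Fin N) ℝ)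
        + (∑ s ∈ S, 2 * w s)⁻¹ • A) ^ k)).prod)
    (hHHP : HHP = ((List.finRange T).map (fun n =>
      (1 / 2 ^ k : ℝ) • (β n • (1 : Matrix (Fin N) (Fin N) ℝ)
        - (∑ s ∈ S, 2 * w s)⁻¹ • A) ^ k)).prod)
    (K : Matrix (Fin N) (Fin N) ℝ)
    (hK : K = Matrix.diagonal (fun a : Fin N => if Even (a : ℕ) then (1 : ℝ) else -1))
    (W : Matrix (Fin N) (Fin N) ℝ)
    (hW : W = (1 / 2 : ℝ) • ((1 + K) * HLP) + (1 / 2 : ℝ) • ((1 - K) * HHP)) :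
    ¬ IsUnit W := by
  have : NeZero N := ⟨by omega⟩
  have hroot {n : Fin T} {l : ℕ} (h : β n = γ l) :
      (hgeswtPolynomial k β (-(∑ s ∈ S, 2 * w s)⁻¹)).IsRoot (circEigenvalue N S w l) :=
    isRoot_hgeswtPolynomial (by omega) (i := n) (by rw [h, hγ, circEigenvalue]; ring)
  simp only [sub_eq_add_neg (_ • _), ← neg_smul, ← aeval_hgeswtPolynomial] at hHLP hHHP
  subst hA hHLP hHHP hK hW
  exact hgeswt_spectral_folding_not_invertible_general hNe w
    (fun s hs => Nat.not_dvd_of_pos_of_lt (by grind) (by grind)) hpq _ _ (hroot hbi) (hroot hbj)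
end
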